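/- arXiv:2112.08456 — 3 statements merged into one kernel-verified Lean document; each statement's English description precedes it below -/
import Mathlib

section
/- Let G be a geometric graph on a set of n points in convex position with e edges, and suppose e ≥ (9/2)·n. Then the number of crossings of G (the number of unordered pairs of edges of G that cross) is at least (20/243)·e³/n². -/
/-- Points of the plane. -/
abbrev Pt : Type := ℝ × ℝ

/-- A finite point set is in general position if no three of its points are collinear. -/
def GenPos (P : Finset Pt) : Prop :=
  ∀ p ∈ P, ∀ q ∈ P, ∀ r ∈ P, p ≠ q → p ≠ r → q ≠ r →
    ¬ Collinear ℝ ({p, q, r} : Set Pt)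

/-- A finite point set is in convex position: general position and no point lies in the
convex hull of the others. -/
def ConvexPos (P : Finset Pt) : Prop :=
  GenPos P ∧ ∀ p ∈ P, p ∉ convexHull ℝ ((P.erase p : Finset Pt) : Set Pt)

/-- The edge set of the complete geometric graph on `P`: all unordered pairs of
distinct points of `P`. -/
def KEdges (P : Finset Pt) : Set (Sym2 Pt) :=
  {e | ∃ p ∈ P, ∃ q ∈ P, p ≠ q ∧ e = s(p, q)}

/-- Two edges cross: they share no endpoint and their open segments intersect. -/
def Cross (e f : Sym2 Pt) : Prop :=
  (∀ x, x ∈ e → x ∉ f) ∧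
    ∃ p q r s : Pt, e = s(p, q) ∧ f = s(r, s) ∧
      (openSegment ℝ p q ∩ openSegment ℝ r s).Nonempty

/-- A set of edges is `k`-plane if each of its edges crosses at most `k` other edges
of the set. -/
def KPlane (k : ℕ) (E : Set (Sym2 Pt)) : Prop :=
  ∀ e ∈ E, {f | f ∈ E ∧ Cross e f}.ncard ≤ k

/-- A set of edges is `k`-quasi-plane if it contains no `k` pairwise crossing edges. -/
def KQuasiPlane (k : ℕ) (E : Set (Sym2 Pt)) : Prop :=
  ¬ ∃ S : Finset (Sym2 Pt), ↑S ⊆ E ∧ S.card = k ∧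
      (S : Set (Sym2 Pt)).Pairwise Cross

/-- The set of crossing pairs (unordered) of a set of edges. -/
def CrossPairs (E : Set (Sym2 Pt)) : Set (Sym2 (Sym2 Pt)) :=
  {c | ∃ e ∈ E, ∃ f ∈ E, Cross e f ∧ c = s(e, f)}

/-- A crossing family in `K(P)`: a finite set of pairwise crossing edges of `K(P)`. -/
def CrossingFamily (P : Finset Pt) (S : Finset (Sym2 Pt)) : Prop :=
  ↑S ⊆ KEdges P ∧ (S : Set (Sym2 Pt)).Pairwise Cross

/-- `E` forms a spanning tree on the point set `P`: all edges are edges of `K(P)` and the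
corresponding graph on the points of `P` is connected and acyclic. -/
def IsSpanningTreeOn (P : Finset Pt) (E : Set (Sym2 Pt)) : Prop :=
  E ⊆ KEdges P ∧
    (SimpleGraph.fromRel (fun a b : {x // x ∈ P} => s((a : Pt), (b : Pt)) ∈ E)).IsTree

/-- Summing a weight of the upper rank over a finite set. -/
lemma sum_rank_gt (w : ℕ → ℕ) (A : Finset ℕ) :
    ∑ x ∈ A, w ((A.filter (fun y => x < y)).card) = ∑ a ∈ Finset.range A.card, w a := by
  induction A using Finset.induction_on_min with
  | empty => simp
  | insert a s ha ih =>
    have hn : a ∉ s := fun h => lt_irrefl _ (ha a h)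
    rw [Finset.sum_insert hn, Finset.card_insert_of_notMem hn, Finset.sum_range_succ, ← ih, add_comm]
    congr 1
    · apply Finset.sum_congr rfl
      intro x hx
      have := ha x hx
      rw [Finset.filter_insert, if_neg (by omega)]
    · rw [Finset.filter_insert, if_neg (by omega), Finset.filter_true_of_mem ha]

lemma sum_rank_lt (w : ℕ → ℕ) (A : Finset ℕ) :
    ∑ x ∈ A, w ((A.filter (fun y => y < x)).card) = ∑ a ∈ Finset.range A.card, w a := by
  induction A using Finset.induction_on_max with
  | empty => simp
  | insert a s ha ih =>
    have hn : a ∉ s := fun h => lt_irrefl _ (ha a h)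
    rw [Finset.sum_insert hn, Finset.card_insert_of_notMem hn, Finset.sum_range_succ, ← ih, add_comm]
    congr 1
    · apply Finset.sum_congr rfl
      intro x hx
      have := ha x hx
      rw [Finset.filter_insert, if_neg (by omega)]
    · rw [Finset.filter_insert, if_neg (by omega), Finset.filter_true_of_mem ha]

/-- Right neighbours. -/
noncomputable def gRow (n : ℕ) (A : ℕ → ℕ → Prop) (i : ℕ) : Finset ℕ :=
  open Classical in (Finset.range n).filter (fun j => A i j)

/-- Left neighbours. -/
noncomputable def gCol (n : ℕ) (A : ℕ → ℕ → Prop) (j : ℕ) : Finset ℕ :=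
  open Classical in (Finset.range n).filter (fun i => A i j)

noncomputable def gAl (n : ℕ) (A : ℕ → ℕ → Prop) (i j : ℕ) : ℕ :=
  ((gRow n A i).filter (fun y => j < y)).card

noncomputable def gBe (n : ℕ) (A : ℕ → ℕ → Prop) (i j : ℕ) : ℕ :=
  ((gCol n A j).filter (fun y => y < i)).card

/-- Combinatorial crossings: `a < b < c < d` with `(a,c)`, `(b,d)` adjacent, stored as
`((a,c),(b,d))`. -/
noncomputable def gQuad (n : ℕ) (A : ℕ → ℕ → Prop) : Finset ((ℕ × ℕ) × (ℕ × ℕ)) :=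
  open Classical in
  ((Finset.range n ×ˢ Finset.range n) ×ˢ (Finset.range n ×ˢ Finset.range n)).filter
    (fun x => A x.1.1 x.1.2 ∧ A x.2.1 x.2.2 ∧ x.1.1 < x.2.1 ∧ x.2.1 < x.1.2 ∧ x.1.2 < x.2.2)

lemma mem_gRow {n A i j} : j ∈ gRow n A i ↔ j < n ∧ A i j := by simp [gRow]
lemma mem_gCol {n A i j} : i ∈ gCol n A j ↔ i < n ∧ A i j := by simp [gCol]

lemma sum_swap (n : ℕ) (A : ℕ → ℕ → Prop) (f : ℕ → ℕ → ℕ) :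
    ∑ i ∈ Finset.range n, ∑ j ∈ gRow n A i, f i j
      = ∑ j ∈ Finset.range n, ∑ i ∈ gCol n A j, f i j := by
  apply Finset.sum_comm'
  intro x y
  simp only [mem_gRow, mem_gCol, Finset.mem_range]
  tauto

lemma quad_bound (n : ℕ) (A : ℕ → ℕ → Prop) (M : Finset (ℕ × ℕ))
    (hM : ∀ x ∈ M, x.1 < x.2 ∧ x.2 < n) :
    ∑ x ∈ M, gAl n A x.1 x.2 * gBe n A x.1 x.2 ≤ (gQuad n A).card := by
  classical
  calc ∑ x ∈ M, gAl n A x.1 x.2 * gBe n A x.1 x.2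
      ≤ ∑ x ∈ M, ((gQuad n A).filter (fun q => (q.2.1, q.1.2) = x)).card := by
        apply Finset.sum_le_sum
        rintro ⟨b, c⟩ hx
        obtain ⟨h1, h2⟩ := hM _ hx
        simp only at h1 h2
        rw [gAl, gBe, ← Finset.card_product]
        apply Finset.card_le_card_of_injOn (fun p => ((p.2, c), (b, p.1)))
        · rintro ⟨d, a⟩ hp
          simp only [Finset.coe_product, Set.mem_prod, Finset.mem_coe, Finset.mem_filter,
            mem_gRow, mem_gCol] at hp
          simp only [gQuad, Finset.coe_filter, Set.mem_ofPred_eq, Finset.mem_filter,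
            Finset.mem_product, Finset.mem_range]
          refine ⟨⟨⟨⟨?_, ?_⟩, ?_, ?_⟩, ?_, ?_, ?_, ?_, ?_⟩, trivial⟩ <;> first | tauto | omega
        · rintro ⟨d, a⟩ _ ⟨d', a'⟩ _ h
          simp only [Prod.mk.injEq] at h
          simp only [Prod.mk.injEq]
          tauto
    _ ≤ (gQuad n A).card := by
        rw [← Finset.card_biUnion]
        · apply Finset.card_le_card
          intro q
          simp only [Finset.mem_biUnion, Finset.mem_filter]
          tauto
        · intro x _ y _ hxy
          rw [Function.onFun, Finset.disjoint_left]
          intro q h1 h2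
          simp only [Finset.mem_filter] at h1 h2
          exact hxy (h1.2.symm.trans h2.2)

lemma choose_edge (K a b : ℕ) :
    K.choose 2 ≤ a * b + (K - a).choose 2 + (K - b).choose 2 := by
  have key : ∀ a b : ℕ, a ≤ K → b ≤ K →
      K.choose 2 ≤ a * b + (K - a).choose 2 + (K - b).choose 2 := by
    intro a b ha hb
    have : ((K.choose 2 : ℕ) : ℚ) ≤
        ((a * b + (K - a).choose 2 + (K - b).choose 2 : ℕ) : ℚ) := by
      push_cast [Nat.cast_choose_two, Nat.cast_sub ha, Nat.cast_sub hb]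
      have h : (0:ℤ) ≤ ((K:ℤ) - a - b) * ((K:ℤ) - a - b - 1) := by
        rcases le_or_gt ((K:ℤ) - a - b) 0 with h | h
        · exact mul_nonneg_of_nonpos_of_nonpos h (by omega)
        · exact mul_nonneg h.le (by omega)
      have h' : (0:ℚ) ≤ ((K:ℚ) - a - b) * ((K:ℚ) - a - b - 1) := by exact_mod_cast h
      nlinarith
    exact_mod_cast this
  have := key (min a K) (min b K) (min_le_right _ _) (min_le_right _ _)
  have e1 : K - min a K = K - a := by omega
  have e2 : K - min b K = K - b := by omega
  rw [e1, e2] at this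
  have : min a K * min b K ≤ a * b := Nat.mul_le_mul (min_le_left _ _) (min_le_left _ _)
  omega

lemma sum_choose_le (K : ℕ) : ∀ m : ℕ, ∑ a ∈ Finset.range m, (K - a).choose 2 ≤ (K + 1).choose 3 := by
  induction K with
  | zero => intro m; simp
  | succ K ih =>
    intro m
    cases m with
    | zero => simp
    | succ m =>
      rw [Finset.sum_range_succ', show (K + 1 + 1).choose 3 = (K+1).choose 2 + (K+1).choose 3 from Nat.choose_succ_succ' (K+1) 2]
      have := ih m
      simp only [Nat.add_sub_add_right, Nat.sub_zero]
      omega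

/-- First linear bound. -/
lemma comb_one (n : ℕ) (A : ℕ → ℕ → Prop) (hA : ∀ i j, A i j → i < j) (K : ℕ) :
    K.choose 2 * (∑ i ∈ Finset.range n, (gRow n A i).card)
      ≤ (gQuad n A).card + 2 * ((K + 1).choose 3 * n) := by
  classical
  have h1 := quad_bound n A ((Finset.range n).sigma (fun i => gRow n A i) |>.map
    (Equiv.sigmaEquivProd ℕ ℕ).toEmbedding) (by
      rintro ⟨i, j⟩ hx
      simp [mem_gRow] at hx
      exact ⟨hA _ _ hx.2.2, hx.2.1⟩)
  rw [Finset.sum_map, Finset.sum_sigma] at h1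
  simp only [Equiv.coe_toEmbedding, Equiv.sigmaEquivProd_apply] at h1
  have h2 : ∑ i ∈ Finset.range n, ∑ j ∈ gRow n A i, (K - gAl n A i j).choose 2
      ≤ (K + 1).choose 3 * n := by
    calc _ ≤ ∑ i ∈ Finset.range n, (K + 1).choose 3 := by
          apply Finset.sum_le_sum
          intro i _
          exact (sum_rank_gt (fun a => (K - a).choose 2) (gRow n A i)).trans_le (sum_choose_le K _)
      _ = _ := by simp [mul_comm]
  have h3 : ∑ i ∈ Finset.range n, ∑ j ∈ gRow n A i, (K - gBe n A i j).choose 2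
      ≤ (K + 1).choose 3 * n := by
    rw [sum_swap n A (fun i j => (K - gBe n A i j).choose 2)]
    calc _ ≤ ∑ i ∈ Finset.range n, (K + 1).choose 3 := by
          apply Finset.sum_le_sum
          intro j _
          exact (sum_rank_lt (fun a => (K - a).choose 2) (gCol n A j)).trans_le (sum_choose_le K _)
      _ = _ := by simp [mul_comm]
  have h4 : K.choose 2 * (∑ i ∈ Finset.range n, (gRow n A i).card) ≤
      ∑ i ∈ Finset.range n, ∑ j ∈ gRow n A i, (gAl n A i j * gBe n A i j
        + (K - gAl n A i j).choose 2 + (K - gBe n A i j).choose 2) := by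
    rw [Finset.mul_sum]
    apply Finset.sum_le_sum
    intro i _
    rw [mul_comm, ← smul_eq_mul, ← Finset.sum_const]
    apply Finset.sum_le_sum
    intro j _
    exact choose_edge _ _ _
  simp only [Finset.sum_add_distrib] at h4
  omega

def wA : ℕ → ℕ
  | 0 => 7 | 1 => 4 | 2 => 2 | 3 => 1 | _ => 0
def wB : ℕ → ℕ
  | 0 => 7 | 1 => 3 | 2 => 1 | _ => 0

lemma w_edge (a b : ℕ) : 7 ≤ a * b + wA a + wB b := by
  match a, b with
  | 0, _ => simp [wA]
  | _, 0 => simp [wB]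
  | 1, 1 => simp [wA, wB]
  | 1, 2 => simp [wA, wB]
  | 1, b+3 => simp [wA, wB]
  | 2, 1 => simp [wA, wB]
  | 2, 2 => simp [wA, wB]
  | 2, b+3 => simp [wA, wB]; try omega
  | 3, 1 => simp [wA, wB]
  | 3, 2 => simp [wA, wB]
  | 3, b+3 => simp [wA, wB]; try omega
  | a+4, 1 => simp [wA, wB]; try omega
  | a+4, 2 => simp [wA, wB]; try omega
  | a+4, b+3 => simp [wA, wB]; nlinarith [Nat.zero_le (a*b)]

lemma sum_wA (m : ℕ) : ∑ a ∈ Finset.range (m + 4), wA a = 14 := by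
  induction m with
  | zero => simp [Finset.sum_range_succ, wA]
  | succ m ih => rw [show m + 1 + 4 = (m + 4) + 1 by ring, Finset.sum_range_succ, ih]; simp [wA]

lemma sum_wB (m : ℕ) : ∑ a ∈ Finset.range (m + 3), wB a = 11 := by
  induction m with
  | zero => simp [Finset.sum_range_succ, wB]
  | succ m ih => rw [show m + 1 + 3 = (m + 3) + 1 by ring, Finset.sum_range_succ, ih]; simp [wB]

lemma w_hull (a b : ℕ) :
    ∑ x ∈ Finset.range a, wA x + ∑ x ∈ Finset.range b, wB x ≤ a * b + 17 := by
  have hb : b = 0 ∨ b = 1 ∨ b = 2 ∨ ∃ m, b = m + 3 := by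
    rcases b with _ | _ | _ | b <;> simp
  have ha : a = 0 ∨ a = 1 ∨ a = 2 ∨ a = 3 ∨ ∃ m, a = m + 4 := by
    rcases a with _ | _ | _ | _ | a <;> simp
  rcases ha with rfl | rfl | rfl | rfl | ⟨m, rfl⟩ <;>
  rcases hb with rfl | rfl | rfl | ⟨k, rfl⟩ <;>
  (try simp only [sum_wA, sum_wB]) <;> (try simp [Finset.sum_range_succ, wA, wB]) <;>
  first | done | omega | nlinarith [Nat.zero_le (m*k)]

/-- Second linear bound, for a relation without hull edges. -/
lemma comb_two (n : ℕ) (A : ℕ → ℕ → Prop) (hA : ∀ i j, A i j → i + 1 < j) :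
    7 * (∑ i ∈ Finset.range n, (gRow n A i).card)
      ≤ (gQuad n A).card + 17 * (n - 1) := by
  classical
  rcases n with _ | n
  · simp
  set S := (Finset.range (n+1)).sigma (fun i => gRow (n+1) A i) |>.map
    (Equiv.sigmaEquivProd ℕ ℕ).toEmbedding with hS
  set H := (Finset.range n).image (fun i => (i, i + 1)) with hH
  have memS : ∀ x ∈ S, x.1 + 1 < x.2 ∧ x.2 < n + 1 := by
    rintro ⟨i, j⟩ hx
    simp [hS, mem_gRow] at hx
    exact ⟨hA _ _ hx.2.2, Nat.lt_succ_of_le hx.2.1⟩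
  have memH : ∀ x ∈ H, x.1 + 1 = x.2 ∧ x.2 < n + 1 := by
    rintro ⟨i, j⟩ hx
    simp [hH] at hx
    simp; omega
  have h1 := quad_bound (n+1) A (S ∪ H) (by
      intro x hx
      rcases Finset.mem_union.1 hx with h | h
      · have := memS x h; omega
      · have := memH x h; omega)
  rw [Finset.sum_union (by
    rw [Finset.disjoint_left]; intro x h h'
    have := memS x h; have := memH x h'; omega)] at h1
  rw [hS, hH, Finset.sum_map, Finset.sum_sigma, Finset.sum_image (by
    intro x _ y _ h; simp at h; exact h)] at h1
  simp only [Equiv.coe_toEmbedding, Equiv.sigmaEquivProd_apply] at h1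
  have hr : ∀ i, gAl (n+1) A i (i+1) = (gRow (n+1) A i).card := by
    intro i
    rw [gAl, Finset.filter_true_of_mem]
    intro j hj
    exact hA _ _ (mem_gRow.1 hj).2
  have hl : ∀ i, gBe (n+1) A i (i+1) = (gCol (n+1) A (i+1)).card := by
    intro i
    rw [gBe, Finset.filter_true_of_mem]
    intro j hj
    have := hA _ _ (mem_gCol.1 hj).2
    omega
  simp only [hr, hl] at h1
  have h2 : ∑ i ∈ Finset.range (n+1), ∑ j ∈ gRow (n+1) A i, wA (gAl (n+1) A i j)
      = ∑ i ∈ Finset.range n, ∑ a ∈ Finset.range (gRow (n+1) A i).card, wA a := by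
    rw [Finset.sum_range_succ]
    have : gRow (n+1) A n = ∅ := by
      ext j; simp only [mem_gRow, Finset.notMem_empty, iff_false]
      rintro ⟨h, h'⟩
      have := hA _ _ h'; omega
    rw [this, Finset.sum_empty, add_zero]
    exact Finset.sum_congr rfl (fun i _ => sum_rank_gt wA _)
  have h3 : ∑ i ∈ Finset.range (n+1), ∑ j ∈ gRow (n+1) A i, wB (gBe (n+1) A i j)
      = ∑ i ∈ Finset.range n, ∑ a ∈ Finset.range (gCol (n+1) A (i+1)).card, wB a := by
    rw [sum_swap (n+1) A (fun i j => wB (gBe (n+1) A i j)), Finset.sum_range_succ']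
    have : gCol (n+1) A 0 = ∅ := by
      ext j; simp only [mem_gCol, Finset.notMem_empty, iff_false]
      rintro ⟨h, h'⟩
      have := hA _ _ h'; omega
    rw [this, Finset.sum_empty, add_zero]
    exact Finset.sum_congr rfl (fun i _ => sum_rank_lt wB _)
  have h4 : 7 * (∑ i ∈ Finset.range (n+1), (gRow (n+1) A i).card) ≤
      ∑ i ∈ Finset.range (n+1), ∑ j ∈ gRow (n+1) A i, (gAl (n+1) A i j * gBe (n+1) A i j
        + wA (gAl (n+1) A i j) + wB (gBe (n+1) A i j)) := by
    rw [Finset.mul_sum]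
    apply Finset.sum_le_sum
    intro i _
    rw [mul_comm, ← smul_eq_mul, ← Finset.sum_const]
    apply Finset.sum_le_sum
    intro j _
    exact w_edge _ _
  have h5 : ∑ i ∈ Finset.range n, (∑ a ∈ Finset.range (gRow (n+1) A i).card, wA a
      + ∑ a ∈ Finset.range (gCol (n+1) A (i+1)).card, wB a) ≤
      ∑ i ∈ Finset.range n, ((gRow (n+1) A i).card * (gCol (n+1) A (i+1)).card + 17) :=
    Finset.sum_le_sum (fun i _ => w_hull _ _)
  simp only [Finset.sum_add_distrib, Finset.sum_const, Finset.card_range, smul_eq_mul] at h4 h5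
  simp only [Nat.add_sub_cancel]
  omega

/-- Second linear bound in general. -/
lemma comb_three (n : ℕ) (A : ℕ → ℕ → Prop) (hA : ∀ i j, A i j → i < j) :
    7 * (∑ i ∈ Finset.range n, (gRow n A i).card)
      ≤ (gQuad n A).card + 24 * n := by
  classical
  set B : ℕ → ℕ → Prop := fun i j => A i j ∧ i + 1 < j with hB
  have h := comb_two n B (fun i j h => h.2)
  have h1 : (gQuad n B).card ≤ (gQuad n A).card := by
    apply Finset.card_le_card
    intro q
    simp only [gQuad, Finset.mem_filter, hB]
    tauto
  have h2 : ∑ i ∈ Finset.range n, (gRow n A i).card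
      ≤ ∑ i ∈ Finset.range n, ((gRow n B i).card + 1) := by
    apply Finset.sum_le_sum
    intro i _
    calc (gRow n A i).card ≤ (insert (i+1) (gRow n B i)).card := by
          apply Finset.card_le_card
          intro j hj
          rw [mem_gRow] at hj
          have := hA _ _ hj.2
          rw [Finset.mem_insert, mem_gRow]
          by_cases h : j = i + 1
          · exact Or.inl h
          · exact Or.inr ⟨hj.1, hj.2, by omega⟩
      _ ≤ _ := Finset.card_insert_le _ _
  simp only [Finset.sum_add_distrib, Finset.sum_const, Finset.card_range, smul_eq_mul] at h2
  omega

lemma final_arith (n e q : ℕ) (h1 : ∀ K : ℕ, K.choose 2 * e ≤ q + 2 * ((K + 1).choose 3 * n))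
    (h2 : 7 * e ≤ q + 24 * n) (he : (9 : ℝ) / 2 * n ≤ (e : ℝ)) :
    (20 : ℝ) / 243 * (e : ℝ) ^ 3 / (n : ℝ) ^ 2 ≤ (q : ℝ) := by
  rcases Nat.eq_zero_or_pos n with rfl | hn
  · simp
  have hn' : (0:ℝ) < n := by exact_mod_cast hn
  set x : ℝ := (e : ℝ) / n with hx
  have hex : (e : ℝ) = x * n := by rw [hx]; field_simp
  have hx1 : 9 / 2 ≤ x := by rw [hx, le_div_iff₀ hn']; exact he
  have goal' : 20 / 243 * x ^ 3 * n ≤ (q:ℝ) → (20 : ℝ) / 243 * (e : ℝ) ^ 3 / (n : ℝ) ^ 2 ≤ (q : ℝ) := by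
    intro h
    refine le_trans (le_of_eq ?_) h
    rw [hex]; field_simp
  apply goal'
  rcases le_or_gt x (26/5) with hx2 | hx2
  · have : (7 * (e:ℝ)) ≤ q + 24 * n := by exact_mod_cast h2
    have h3 : 20 / 243 * x ^ 3 ≤ 7 * x - 24 := by
      nlinarith [mul_nonneg (sub_nonneg.2 hx1) (sub_nonneg.2 hx2), 
        mul_nonneg (mul_nonneg (sub_nonneg.2 hx1) (sub_nonneg.2 hx2)) (by linarith : (0:ℝ) ≤ x)]
    have := mul_le_mul_of_nonneg_right h3 hn'.le
    rw [hex] at *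
    nlinarith
  · set K := ⌊x⌋₊ with hK
    have hx0 : 0 ≤ x := by linarith
    have k1 : (K:ℝ) ≤ x := Nat.floor_le hx0
    have k2 : x < K + 1 := Nat.lt_floor_add_one x
    have h3 : ((K.choose 2 * e : ℕ) : ℝ) ≤ ((q + 2 * ((K + 1).choose 3 * n) : ℕ) : ℝ) := by
      exact_mod_cast h1 K
    have c3 : (((K + 1).choose 3 : ℕ) : ℝ) = (K + 1) * K * (K - 1) / 6 := by
      clear_value K
      clear * -
      induction K with
      | zero => simp [Nat.choose]
      | succ m ih =>
        rw [Nat.choose_succ_succ' (m+1) 2]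
        push_cast [ih, Nat.cast_choose_two]
        ring
    push_cast [Nat.cast_choose_two, c3] at h3
    rw [hex] at h3
    have k5 : (5:ℝ) ≤ K := by
      have : 5 ≤ K := Nat.le_floor (by push_cast; linarith)
      exact_mod_cast this
    set t := x - K with ht
    have t0 : 0 ≤ t := by linarith
    have t1 : t ≤ 1 := by linarith
    have hd : 0 ≤ t * ((1 - t) * (3 * K - 2 + t)) :=
      mul_nonneg t0 (mul_nonneg (by linarith) (by linarith))
    have a1 : x * (x - 1) * (x - 2) / 6 ≤ K * (K - 1) / 2 * x - (K + 1) * K * (K - 1) / 3 := by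
      have : x = K + t := by rw [ht]; ring
      rw [this]
      nlinarith
    have a2 : 20 / 243 * x ^ 3 ≤ x * (x - 1) * (x - 2) / 6 := by
      have : 0 ≤ x * ((x - 26/5) * (x - 1/2)) :=
        mul_nonneg hx0 (mul_nonneg (by linarith) (by linarith))
      nlinarith
    have a3 := mul_le_mul_of_nonneg_right (a2.trans a1) hn'.le
    linarith

/-- Twice the signed area of a triangle. -/
def ori (p q r : Pt) : ℝ := (q.1 - p.1) * (r.2 - p.2) - (q.2 - p.2) * (r.1 - p.1)

lemma ori_cross (a b c d : Pt) (h1 : 0 < ori a b c) (h2 : 0 < ori a c d) (h3 : 0 < ori a b d)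
    (h4 : 0 < ori b c d) : (openSegment ℝ a c ∩ openSegment ℝ b d).Nonempty := by
  have hs : ori b c d + ori a b d = ori a c d + ori a b c := by simp only [ori]; ring
  have hpos : 0 < ori a c d + ori a b c := by linarith
  refine ⟨(ori b c d / (ori a c d + ori a b c)) • a + (ori a b d / (ori a c d + ori a b c)) • c,
    ⟨_, _, div_pos h4 hpos, div_pos h3 hpos, ?_, rfl⟩,
    ⟨ori a c d / (ori a c d + ori a b c), ori a b c / (ori a c d + ori a b c),
      div_pos h2 hpos, div_pos h1 hpos, ?_, ?_⟩⟩
  · rw [← add_div, hs, div_self hpos.ne']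
  · rw [← add_div, div_self hpos.ne']
  · have hne := hpos.ne'
    ext
    · simp only [Prod.fst_add, Prod.smul_fst, smul_eq_mul]
      field_simp
      simp only [ori]; ring
    · simp only [Prod.snd_add, Prod.smul_snd, smul_eq_mul]
      field_simp
      simp only [ori]; ring

lemma ori_tri (p b c d : Pt) (S : Set Pt) (hp : p ∈ S) (hb : b ∈ S) (hd : d ∈ S)
    (hc : c ∉ convexHull ℝ S) (h1 : 0 < ori p b c) (h2 : 0 < ori p c d) (h3 : 0 < ori p b d) :
    0 < ori b c d := by
  by_contra hneg
  push Not at hneg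
  apply hc
  have hcv := convex_convexHull ℝ S
  have hs : -ori b c d + ori p c d + ori p b c = ori p b d := by simp only [ori]; ring
  have hne := h3.ne'
  have key : c = (-ori b c d / ori p b d) • p + (ori p c d / ori p b d) • b
      + (ori p b c / ori p b d) • d := by
    ext
    · simp only [Prod.fst_add, Prod.smul_fst, smul_eq_mul]
      field_simp
      simp only [ori]; ring
    · simp only [Prod.snd_add, Prod.smul_snd, smul_eq_mul]
      field_simp
      simp only [ori]; ring
  have hmem := hcv.sum_mem (t := Finset.univ)
    (w := ![-ori b c d / ori p b d, ori p c d / ori p b d, ori p b c / ori p b d])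
    (z := ![p, b, d]) (by
      intro i _
      fin_cases i
      · exact div_nonneg (by linarith) h3.le
      · exact div_nonneg h2.le h3.le
      · exact div_nonneg h1.le h3.le) (by
      simp only [Fin.sum_univ_three, Matrix.cons_val_zero, Matrix.cons_val_one, Matrix.cons_val]
      rw [← add_div, ← add_div, hs, div_self hne]) (by
      intro i _
      fin_cases i
      · exact subset_convexHull ℝ S hp
      · exact subset_convexHull ℝ S hb
      · exact subset_convexHull ℝ S hd)
  simp only [Fin.sum_univ_three, Matrix.cons_val_zero, Matrix.cons_val_one, Matrix.cons_val] at hmem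
  rw [key]
  exact hmem

lemma exists_enum {L : Type*} [LinearOrder L] (P : Finset Pt) (key : Pt → L)
    (hinj : Set.InjOn key P) : ∃ g : ℕ → Pt, (∀ i < P.card, g i ∈ P) ∧
      (∀ q ∈ P, ∃ i < P.card, g i = q) ∧ ∀ i j, i < j → j < P.card → key (g i) < key (g j) := by
  classical
  have hc : (P.image key).card = P.card := Finset.card_image_of_injOn hinj
  let φ := (P.image key).orderIsoOfFin hc
  have hφ : ∀ i : Fin P.card, ∃ q ∈ P, key q = φ i := by
    intro i
    exact Finset.mem_image.1 (φ i).2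
  choose g hg1 hg2 using hφ
  refine ⟨fun i => if h : i < P.card then g ⟨i, h⟩ else (0, 0), ?_, ?_, ?_⟩
  · intro i hi
    simp only [hi, dif_pos]
    exact hg1 _
  · intro q hq
    obtain ⟨i, hi⟩ := φ.surjective ⟨key q, Finset.mem_image_of_mem _ hq⟩
    refine ⟨i, i.2, ?_⟩
    simp only [i.2, dif_pos]
    apply hinj (hg1 _) hq
    rw [hg2]
    simp [hi]
  · intro i j hij hj
    have hi : i < P.card := hij.trans hj
    simp only [hi, hj, dif_pos, hg2]
    have : φ ⟨i, hi⟩ < φ ⟨j, hj⟩ := φ.strictMono hij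
    exact this

lemma exists_convex_enum (P : Finset Pt) (hP : ConvexPos P) :
    ∃ g : ℕ → Pt, (∀ i < P.card, g i ∈ P) ∧ (∀ q ∈ P, ∃ i < P.card, g i = q) ∧
      (∀ i j, i < j → j < P.card → g i ≠ g j) ∧
      ∀ a b c, a < b → b < c → c < P.card → 0 < ori (g a) (g b) (g c) := by
  classical
  rcases P.eq_empty_or_nonempty with rfl | ⟨p, hp⟩
  · exact ⟨fun _ => (0, 0), by simp, by simp, by simp, by simp⟩
  obtain ⟨hgen, hcon⟩ := hP
  obtain ⟨f, u, hfp, hfu⟩ := geometric_hahn_banach_point_closed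
    (convex_convexHull ℝ ((P.erase p : Finset Pt) : Set Pt))
    ((P.erase p).finite_toSet.isClosed_convexHull ℝ) (hcon p hp)
  have hf : ∀ z : Pt, f z = z.1 * f (1, 0) + z.2 * f (0, 1) := by
    intro z
    have : z = z.1 • ((1, 0) : Pt) + z.2 • ((0, 1) : Pt) := by ext <;> simp
    conv_lhs => rw [this]
    rw [map_add, map_smul, map_smul, smul_eq_mul, smul_eq_mul]
  set s := f (1, 0) with hs
  set t := f (0, 1) with ht
  set F : Pt → ℝ := fun q => s * (q.1 - p.1) + t * (q.2 - p.2) with hF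
  set G : Pt → ℝ := fun q => s * (q.2 - p.2) - t * (q.1 - p.1) with hG
  have hpos : ∀ q ∈ P, q ≠ p → 0 < F q := by
    intro q hq hne
    have := hfu q (subset_convexHull ℝ _ (by simp [hne, hq]))
    have h2 := hfp.trans this
    rw [hf p, hf q] at h2
    simp only [hF]
    nlinarith
  have hdet : ∀ q r, F q * G r - G q * F r = (s ^ 2 + t ^ 2) * ori p q r := by
    intro q r
    simp only [hF, hG, ori]; ring
  have hlt : ∀ q ∈ P, ∀ r ∈ P, q ≠ p → r ≠ p → G q / F q < G r / F r → 0 < ori p q r := by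
    intro q hq r hr hqp hrp h
    rw [div_lt_div_iff₀ (hpos q hq hqp) (hpos r hr hrp)] at h
    have h1 := hdet q r
    have h2 : 0 < (s ^ 2 + t ^ 2) * ori p q r := by linarith
    exact pos_of_mul_pos_right h2 (by positivity)
  set key : Pt → WithBot ℝ := fun q => if q = p then ⊥ else ((G q / F q : ℝ) : WithBot ℝ) with hkey
  have hinj : Set.InjOn key P := by
    intro q hq r hr h
    simp only [hkey] at h
    by_cases hqp : q = p <;> by_cases hrp : r = p
    · rw [hqp, hrp]
    · simp [hqp, hrp] at h
    · simp [hqp, hrp] at h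
    · rw [if_neg hqp, if_neg hrp, WithBot.coe_inj] at h
      by_contra hne
      apply hgen p hp q hq r hr (Ne.symm hqp) (Ne.symm hrp) hne
      have h1 := hpos q hq hqp
      have h2 := hpos r hr hrp
      rw [div_eq_div_iff h1.ne' h2.ne'] at h
      have hst : 0 < s ^ 2 + t ^ 2 := by
        rcases eq_or_ne s 0 with h0 | h0
        · rcases eq_or_ne t 0 with h0' | h0'
          · simp [hF, h0, h0'] at h1
          · positivity
        · positivity
      have ho : F q * G r - G q * F r = 0 := by linarith
      have hne1 := h1.ne'
      rw [collinear_iff_of_mem (p₀ := p) (by simp)]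
      refine ⟨q - p, ?_⟩
      intro z hz
      rcases hz with rfl | rfl | hz
      · exact ⟨0, by simp⟩
      · exact ⟨1, by simp⟩
      · rw [Set.mem_singleton_iff] at hz
        subst hz
        have e0 : ori p q z = 0 := by
          have := hdet q z
          rw [ho] at this
          rcases mul_eq_zero.1 this.symm with h | h
          · exact absurd h hst.ne'
          · exact h
        refine ⟨F z / F q, ?_⟩
        simp only [ori] at e0
        have e1 : F z * (q.1 - p.1) = F q * (z.1 - p.1) := by
          simp only [hF]; linear_combination t * e0
        have e2 : F z * (q.2 - p.2) = F q * (z.2 - p.2) := by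
          simp only [hF]; linear_combination (-s) * e0
        ext
        · simp only [vadd_eq_add, Prod.fst_add, Prod.smul_fst, Prod.fst_sub, smul_eq_mul]
          rw [div_mul_eq_mul_div, e1, mul_div_cancel_left₀ _ hne1]; ring
        · simp only [vadd_eq_add, Prod.snd_add, Prod.smul_snd, Prod.snd_sub, smul_eq_mul]
          rw [div_mul_eq_mul_div, e2, mul_div_cancel_left₀ _ hne1]; ring
  obtain ⟨g, hg1, hg2, hg3⟩ := exists_enum P key hinj
  have hklt : ∀ q ∈ P, ∀ r ∈ P, key q < key r → r ≠ p ∧ (q ≠ p → 0 < ori p q r) := by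
    intro q hq r hr h
    have hrp : r ≠ p := by
      rintro rfl
      simp [hkey] at h
    refine ⟨hrp, fun hqp => hlt q hq r hr hqp hrp ?_⟩
    simp only [hkey, if_neg hqp, if_neg hrp, WithBot.coe_lt_coe] at h
    exact h
  refine ⟨g, hg1, hg2, ?_, ?_⟩
  · intro i j hij hj h
    have := hg3 i j hij hj
    rw [h] at this
    exact lt_irrefl _ this
  · intro a b c hab hbc hc
    have ma := hg1 a (by omega)
    have mb := hg1 b (by omega)
    have mc := hg1 c hc
    have kab := hg3 a b hab (by omega)
    have kbc := hg3 b c hbc hc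
    have oab := hklt _ ma _ mb kab
    have obc := hklt _ mb _ mc kbc
    have oac := hklt _ ma _ mc (kab.trans kbc)
    by_cases hap : g a = p
    · rw [hap]; exact obc.2 oab.1
    · refine ori_tri p (g a) (g b) (g c) ((P.erase (g b) : Finset Pt) : Set Pt) ?_ ?_ ?_
        (hcon _ mb) (oab.2 hap) (obc.2 oab.1) (oac.2 hap)
      · simp [hp, Ne.symm oab.1]
      · have : g a ≠ g b := fun h => by rw [h] at kab; exact lt_irrefl _ kab
        simp [ma, this]
      · have : g c ≠ g b := fun h => by rw [h] at kbc; exact lt_irrefl _ kbc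
        simp [mc, this]

/-- convex crossing lemma: a convex geometric graph on `n` vertices with
`e ≥ (9/2)·n` edges has at least `(20/243)·e³/n²` crossings. -/
theorem stmt_7 (n : ℕ) (P : Finset Pt) (hP : ConvexPos P) (hcard : P.card = n)
    (E : Set (Sym2 Pt)) (hE : E ⊆ KEdges P)
    (he : (9 : ℝ) / 2 * n ≤ (E.ncard : ℝ)) :
    (20 : ℝ) / 243 * (E.ncard : ℝ) ^ 3 / (n : ℝ) ^ 2 ≤ ((CrossPairs E).ncard : ℝ) := by
  classical
  obtain ⟨g, hg1, hg2, hg3, hg4⟩ := exists_convex_enum P hP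
  rw [hcard] at hg1 hg2 hg3 hg4
  have hinj : ∀ i j, i < n → j < n → g i = g j → i = j := by
    intro i j hi hj h
    rcases lt_trichotomy i j with h' | h' | h'
    · exact absurd h (hg3 i j h' hj)
    · exact h'
    · exact absurd h.symm (hg3 j i h' hi)
  set A : ℕ → ℕ → Prop := fun i j => i < j ∧ s(g i, g j) ∈ E with hA
  have hA' : ∀ i j, A i j → i < j := fun i j h => h.1
  have hedge : ∀ i j k l, i < j → k < l → j < n → l < n → s(g i, g j) = s(g k, g l) →
      i = k ∧ j = l := by
    intro i j k l hij hkl hj hl h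
    rw [Sym2.eq_iff] at h
    rcases h with ⟨h1, h2⟩ | ⟨h1, h2⟩
    · exact ⟨hinj _ _ (by omega) (by omega) h1, hinj _ _ hj hl h2⟩
    · have := hinj _ _ (by omega) (by omega) h1
      have := hinj _ _ (by omega) (by omega) h2
      omega
  -- the number of edges
  have hEimg : E ⊆ (((Finset.range n).sigma (fun i => gRow n A i)).image
      (fun x => s(g x.1, g x.2)) : Finset (Sym2 Pt)) := by
    intro e hee
    obtain ⟨p, hp, q, hq, hpq, rfl⟩ := hE hee
    obtain ⟨i, hi, rfl⟩ := hg2 p hp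
    obtain ⟨j, hj, rfl⟩ := hg2 q hq
    rw [Finset.mem_coe, Finset.mem_image]
    rcases lt_trichotomy i j with h | h | h
    · exact ⟨⟨i, j⟩, by simp [mem_gRow, hi, hj, hA, h, hee], rfl⟩
    · exact absurd (by rw [h]) hpq
    · refine ⟨⟨j, i⟩, ?_, Sym2.eq_swap⟩
      rw [Sym2.eq_swap] at hee
      simp [mem_gRow, hi, hj, hA, h, hee]
  have hEfin : E.Finite := (Finset.finite_toSet _).subset hEimg
  have hEcard : E.ncard ≤ ∑ i ∈ Finset.range n, (gRow n A i).card := by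
    calc E.ncard ≤ _ := Set.ncard_le_ncard hEimg (Finset.finite_toSet _)
      _ = _ := Set.ncard_coe_finset _
      _ ≤ _ := Finset.card_image_le
      _ = _ := Finset.card_sigma _ _
  -- the number of crossings
  have hfin : (CrossPairs E).Finite := by
    refine ((hEfin.prod hEfin).image (fun x => s(x.1, x.2))).subset ?_
    rintro c ⟨e, he, f, hf, _, rfl⟩
    exact ⟨(e, f), ⟨he, hf⟩, rfl⟩
  have hQ : (gQuad n A).card ≤ (CrossPairs E).ncard := by
    rw [← Set.ncard_coe_finset]
    apply Set.ncard_le_ncard_of_injOn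
      (fun x => s(s(g x.1.1, g x.1.2), s(g x.2.1, g x.2.2))) _ _ hfin
    · rintro ⟨⟨a, c⟩, ⟨b, d⟩⟩ hx
      simp only [gQuad, Finset.mem_coe, Finset.mem_filter, Finset.mem_product,
        Finset.mem_range] at hx
      obtain ⟨⟨⟨ha, hc⟩, hb, hd⟩, h1, h2, hab, hbc, hcd⟩ := hx
      refine ⟨_, h1.2, _, h2.2, ⟨?_, _, _, _, _, rfl, rfl, ?_⟩, rfl⟩
      · intro x hx hx'
        rw [Sym2.mem_iff] at hx hx'
        rcases hx with rfl | rfl <;> rcases hx' with h | h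
        · have := hinj _ _ ha hb h; omega
        · have := hinj _ _ ha hd h; omega
        · have := hinj _ _ hc hb h; omega
        · have := hinj _ _ hc hd h; omega
      · exact ori_cross _ _ _ _ (hg4 a b c hab hbc hc) (hg4 a c d (by omega) hcd hd)
          (hg4 a b d hab (by omega) hd) (hg4 b c d hbc hcd hd)
    · rintro ⟨⟨a, c⟩, ⟨b, d⟩⟩ hx ⟨⟨a', c'⟩, ⟨b', d'⟩⟩ hx' h
      simp only [gQuad, Finset.mem_coe, Finset.mem_filter, Finset.mem_product,
        Finset.mem_range] at hx hx'
      obtain ⟨⟨⟨ha, hc⟩, hb, hd⟩, h1, h2, hab, hbc, hcd⟩ := hx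
      obtain ⟨⟨⟨ha', hc'⟩, hb', hd'⟩, h1', h2', hab', hbc', hcd'⟩ := hx'
      simp only at h
      rw [Sym2.eq_iff] at h
      rcases h with ⟨e1, e2⟩ | ⟨e1, e2⟩
      · have := hedge _ _ _ _ (by omega) (by omega) hc hc' e1
        have := hedge _ _ _ _ (by omega) (by omega) hd hd' e2
        simp only [Prod.mk.injEq]
        omega
      · have := hedge _ _ _ _ (by omega) (by omega) hc hd' e1
        have := hedge _ _ _ _ (by omega) (by omega) hd hc' e2
        omega
  apply final_arith n E.ncard (CrossPairs E).ncard _ _ he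
  · intro K
    have := comb_one n A hA' K
    have h2 := Nat.mul_le_mul_left (K.choose 2) hEcard
    omega
  · have := comb_three n A hA'
    omega
end

section
/- Let P be a set of 2n points in the plane in general position. Then the edge set of the complete geometric graph K(P) can be partitioned into n classes such that each class forms a spanning tree of K(P) (a connected acyclic graph on all 2n points) and each class, viewed as a geometric graph, is 3-quasi-plane (contains no 3 pairwise crossing edges). -/
theorem tree_of_par {V : Type} [Finite V] (G : SimpleGraph V) (r : V) (par : V → V)
    (h1 : ∀ v, v ≠ r → G.Adj v (par v)) (h2 : ∀ v, v = r ∨ par v = r ∨ par (par v) = r)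
    (h3 : ∀ u v, G.Adj u v → (u ≠ r ∧ par u = v) ∨ (v ≠ r ∧ par v = u)) : G.IsTree := by
  classical
  have := Fintype.ofFinite V
  have hreach : ∀ v, G.Reachable v r := by
    have step : ∀ v, G.Reachable (par v) r → G.Reachable v r := by
      intro v hv
      by_cases hvr : v = r
      · rw [hvr]
      · exact (h1 v hvr).reachable.trans hv
    intro v
    rcases h2 v with h | h | h
    · rw [h]
    · exact step v (by rw [h])
    · exact step v (step _ (by rw [h]))
  have hconn : G.Connected :=
    { preconnected := fun u v => (hreach u).trans (hreach v).symm
      nonempty := ⟨r⟩ }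
  rw [SimpleGraph.isTree_iff_connected_and_card]
  refine ⟨hconn, le_antisymm ?_ hconn.card_vert_le_card_edgeSet_add_one⟩
  have hsub : G.edgeSet ⊆ (fun v => s(v, par v)) '' {v | v ≠ r} := by
    intro e
    induction e using Sym2.ind with
    | _ u v =>
      intro h
      rcases h3 u v h with ⟨a, b⟩ | ⟨a, b⟩
      · exact ⟨u, a, by simp [b]⟩
      · exact ⟨v, a, by simp [b, Sym2.eq_swap]⟩
  have h4 : Nat.card G.edgeSet ≤ ({v | v ≠ r} : Set V).ncard :=
    (Set.ncard_le_ncard hsub (Set.toFinite _)).trans (Set.ncard_image_le (Set.toFinite _))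
  have h5 : ({v | v ≠ r} : Set V).ncard + 1 = Nat.card V := by
    have := Set.ncard_add_ncard_compl ({r} : Set V)
    rw [Set.ncard_singleton] at this
    rw [← this, add_comm]
    rfl
  omega

/-- The index of the double star containing the edge `uv`. -/
def dsCol {n : ℕ} (u v : Fin n × Bool) : Fin n :=
  if u.2 = v.2 then min u.1 v.1 else max u.1 v.1

theorem dsCol_comm {n : ℕ} (u v : Fin n × Bool) : dsCol u v = dsCol v u := by
  unfold dsCol
  simp only [eq_comm, min_comm, max_comm]

theorem dsCol_mem {n : ℕ} (u v : Fin n × Bool) : u.1 = dsCol u v ∨ v.1 = dsCol u v := by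
  unfold dsCol
  split_ifs
  · rcases min_choice u.1 v.1 with h | h <;> simp [h]
  · rcases max_choice u.1 v.1 with h | h <;> simp [h]

/-- Parent of a vertex in the `i`-th double star. -/
def dsPar {n : ℕ} (i : Fin n) (v : Fin n × Bool) : Fin n × Bool :=
  (i, if v.1 = i then false else if i < v.1 then v.2 else !v.2)

theorem dsTree {n : ℕ} (i : Fin n) (G : SimpleGraph (Fin n × Bool))
    (hG : ∀ u v, G.Adj u v ↔ u ≠ v ∧ dsCol u v = i) : G.IsTree := by
  apply tree_of_par G (i, false) (dsPar i)
  · rintro ⟨j, b⟩ h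
    rw [hG]
    simp only [dsPar, dsCol]
    rcases lt_trichotomy i j with hij | hij | hij
    · simp [hij, hij.ne', hij.le]
    · subst hij
      simpa using h
    · simp [hij.ne, hij.not_gt, hij.le]
  · rintro ⟨j, b⟩
    right; right
    simp [dsPar]
  · rintro ⟨j, b⟩ ⟨k, c⟩ h
    rw [hG] at h
    obtain ⟨hne, hc⟩ := h
    simp only [dsCol] at hc
    simp only [dsPar, Prod.mk.injEq, ne_eq] at *
    clear hG
    cases b <;> cases c <;> grind

/-- For `2n` points in general position, `K(P)` can be partitioned into `n`
classes, each a 3-quasi-plane spanning tree. -/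
theorem stmt_9 (n : ℕ) (P : Finset Pt) (hP : GenPos P) (hcard : P.card = 2 * n) :
    ∃ F : Fin n → Set (Sym2 Pt),
      (⋃ i, F i) = KEdges P ∧
      (Pairwise fun i j => Disjoint (F i) (F j)) ∧
      (∀ i, IsSpanningTreeOn P (F i)) ∧
      (∀ i, KQuasiPlane 3 (F i)) := by
  classical
  have hc : Fintype.card (Fin n × Bool) = Fintype.card {x // x ∈ P} := by
    simp [hcard, mul_comm]
  let g : Fin n × Bool ≃ {x // x ∈ P} := Fintype.equivOfCardEq hc
  have ginj : ∀ u v, ((g u : Pt) = g v) ↔ u = v := by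
    intro u v
    rw [← Subtype.ext_iff, g.injective.eq_iff]
  have key : ∀ u v u' v', s((g u : Pt), (g v : Pt)) = s((g u' : Pt), (g v' : Pt)) →
      dsCol u v = dsCol u' v' := by
    intro u v u' v' h
    rw [Sym2.eq_iff] at h
    simp only [ginj] at h
    rcases h with ⟨rfl, rfl⟩ | ⟨rfl, rfl⟩
    · rfl
    · exact dsCol_comm _ _
  refine ⟨fun i => {e | ∃ u v, u ≠ v ∧ dsCol u v = i ∧ e = s((g u : Pt), (g v : Pt))},
    ?_, ?_, ?_, ?_⟩
  · ext e
    simp only [Set.mem_iUnion, Set.mem_ofPred_eq, KEdges]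
    constructor
    · rintro ⟨i, u, v, huv, -, rfl⟩
      exact ⟨g u, (g u).2, g v, (g v).2, by simpa [ginj] using huv, rfl⟩
    · rintro ⟨p, hp, q, hq, hpq, rfl⟩
      refine ⟨_, g.symm ⟨p, hp⟩, g.symm ⟨q, hq⟩, by simpa using hpq, rfl, by simp⟩
  · intro i j hij
    rw [Set.disjoint_left]
    rintro e ⟨u, v, -, h1, rfl⟩ ⟨u', v', -, h2, h3⟩
    exact hij (by rw [← h1, ← h2, key _ _ _ _ h3])
  · intro i
    constructor
    · rintro e ⟨u, v, huv, -, rfl⟩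
      exact ⟨g u, (g u).2, g v, (g v).2, by simpa [ginj] using huv, rfl⟩
    · set G := SimpleGraph.fromRel (fun a b : {x // x ∈ P} => s((a : Pt), (b : Pt)) ∈
        {e | ∃ u v, u ≠ v ∧ dsCol u v = i ∧ e = s((g u : Pt), (g v : Pt))}) with hGdef
      rw [← (SimpleGraph.Iso.comap g G).isTree_iff]
      apply dsTree i
      intro u v
      rw [SimpleGraph.comap_adj, hGdef, SimpleGraph.fromRel_adj]
      constructor
      · rintro ⟨hne, ⟨u', v', -, h2, h3⟩ | ⟨u', v', -, h2, h3⟩⟩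
        · exact ⟨fun h => hne (by rw [h]), by rw [← h2]; exact key _ _ _ _ h3⟩
        · exact ⟨fun h => hne (by rw [h]), by
            rw [← h2, dsCol_comm]; exact key _ _ _ _ h3⟩
      · rintro ⟨hne, h⟩
        exact ⟨fun h => hne (g.injective h), Or.inl ⟨u, v, hne, h, rfl⟩⟩
  · rintro i ⟨S, hS, h3, hp⟩
    have hb : ∀ e ∈ S, ∃ b, (g (i, b) : Pt) ∈ e := by
      intro e he
      obtain ⟨u, v, -, h, rfl⟩ := hS he
      rcases dsCol_mem u v with h' | h'
      · exact ⟨u.2, by rw [← h, ← h']; simp⟩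
      · exact ⟨v.2, by rw [← h, ← h']; simp⟩
    choose! b hb using hb
    obtain ⟨x, hx, y, hy, hxy, hbxy⟩ :=
      Finset.exists_ne_map_eq_of_card_lt_of_maps_to (s := S) (t := Finset.univ) (f := b)
        (by simp [h3]) (fun _ _ => by simp)
    have h1 := hb x hx
    rw [hbxy] at h1
    exact (hp hx hy hxy).1 _ h1 (hb y hy)
end

section
/- Let P be a set of n points in the plane in general position, let m be the size of a largest crossing family in the complete geometric graph K(P) (the maximum size of a set of pairwise crossing edges of K(P)), and let k be an integer with 3 ≤ k ≤ m. Then the edge set of K(P) can be partitioned into at most ⌈m/(k−1)⌉ + ⌈(n−2m)/(k−1)⌉ classes such that each class, viewed as a geometric graph on P, is k-quasi-plane. -/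
/-- Twice the signed area of a triangle. -/
def orient (p q r : Pt) : ℝ := (q.1 - p.1) * (r.2 - p.2) - (q.2 - p.2) * (r.1 - p.1)

theorem orient_ne {p q r : Pt} (hpq : p ≠ q) (h : ¬ Collinear ℝ ({p, q, r} : Set Pt)) :
    orient p q r ≠ 0 := by
  intro h0
  apply h
  rw [collinear_iff_of_mem (p₀ := p) (by simp)]
  refine ⟨q - p, ?_⟩
  unfold orient at h0
  intro z hz
  simp only [Set.mem_insert_iff, Set.mem_singleton_iff] at hz
  rcases hz with rfl | rfl | rfl
  · exact ⟨0, by simp⟩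
  · exact ⟨1, by simp⟩
  · by_cases h1 : q.1 - p.1 = 0
    · have h2 : q.2 - p.2 ≠ 0 := by
        intro h2
        exact hpq (Prod.ext (by linarith) (by linarith))
      have h3 : z.1 - p.1 = 0 := by
        rw [h1] at h0
        have : (q.2 - p.2) * (z.1 - p.1) = 0 := by linarith
        exact (mul_eq_zero.mp this).resolve_left h2
      refine ⟨(z.2 - p.2) / (q.2 - p.2), Prod.ext ?_ ?_⟩
      · simp [h1]; linarith
      · simp; field_simp; ring
    · refine ⟨(z.1 - p.1) / (q.1 - p.1), Prod.ext ?_ ?_⟩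
      · simp; field_simp; ring
      · simp; field_simp; linarith

theorem cross_mk {a b c d : Pt} (h : Cross s(a, b) s(c, d)) :
    (openSegment ℝ a b ∩ openSegment ℝ c d).Nonempty := by
  obtain ⟨-, p, q, r, s, h1, h2, h3⟩ := h
  rw [Sym2.eq_iff] at h1 h2
  rcases h1 with ⟨rfl, rfl⟩ | ⟨rfl, rfl⟩ <;> rcases h2 with ⟨rfl, rfl⟩ | ⟨rfl, rfl⟩
  · exact h3
  · rwa [openSegment_symm ℝ c d]
  · rwa [openSegment_symm ℝ a b]
  · rwa [openSegment_symm ℝ a b, openSegment_symm ℝ c d]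

theorem orient_pos_or {x x' y y' : Pt} (h : Cross s(x, x') s(y, y'))
    (h0 : orient x x' y ≠ 0) : 0 < orient x x' y ∨ 0 < orient y y' x := by
  obtain ⟨z, ⟨a, b, ha, hb, hab, h1⟩, ⟨c, d, hc, hd, hcd, h2⟩⟩ := cross_mk h
  obtain rfl : a = 1 - b := by linarith
  obtain rfl : c = 1 - d := by linarith
  rw [← h2] at h1
  have e1 := congrArg Prod.fst h1
  have e2 := congrArg Prod.snd h1
  simp at e1 e2
  set w := (x'.1 - x.1) * (y'.2 - y.2) - (x'.2 - x.2) * (y'.1 - y.1) with hw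
  have k1 : orient x x' y = - d * w := by
    unfold orient
    rw [hw]
    linear_combination (x'.2 - x.2) * e1 - (x'.1 - x.1) * e2
  have k2 : orient y y' x = b * w := by
    unfold orient
    rw [hw]
    linear_combination (y'.1 - y.1) * e2 - (y'.2 - y.2) * e1
  rcases lt_trichotomy w 0 with hlt | heq | hgt
  · left; rw [k1]; nlinarith
  · exact absurd (by rw [k1, heq]; ring) h0
  · right; rw [k2]; positivity

/-- The double star of an edge. -/
def DStar (e : Sym2 Pt) : Set (Sym2 Pt) :=
  {g | g = e ∨ ∃ x x' y, e = s(x, x') ∧ g = s(x, y) ∧ 0 < orient x x' y}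

theorem not_cross_of_mem {e f : Sym2 Pt} (x : Pt) (h1 : x ∈ e) (h2 : x ∈ f) : ¬ Cross e f :=
  fun h => h.1 x h1 h2

theorem dstar_plane {e g h : Sym2 Pt} (hg : g ∈ DStar e) (hh : h ∈ DStar e) : ¬ Cross g h := by
  rcases hg with rfl | ⟨x, x', y, he, rfl, ho⟩
  · rcases hh with rfl | ⟨x, x', y, he, rfl, ho⟩
    · induction h using Sym2.ind with
      | _ a b => exact not_cross_of_mem a (by simp) (by simp)
    · exact not_cross_of_mem x (by simp [he]) (by simp)
  · rcases hh with rfl | ⟨u, u', z, he', rfl, ho'⟩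
    · exact not_cross_of_mem x (by simp) (by simp [he])
    · rw [he, Sym2.eq_iff] at he'
      rcases he' with ⟨rfl, rfl⟩ | ⟨rfl, rfl⟩
      · exact not_cross_of_mem x (by simp) (by simp)
      · intro hc
        obtain ⟨w, ⟨a, b, ha, hb, hab, h1⟩, ⟨c, d, hc, hd, hcd, h2⟩⟩ := cross_mk hc
        obtain rfl : a = 1 - b := by linarith
        obtain rfl : c = 1 - d := by linarith
        rw [← h2] at h1
        have e1 := congrArg Prod.fst h1
        have e2 := congrArg Prod.snd h1
        simp at e1 e2
        have p1 := mul_pos hb ho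
        have p2 := mul_pos hd ho'
        have : b * orient x x' y + d * orient x' x z = 0 := by
          unfold orient
          linear_combination (x'.1 - x.1) * e2 - (x'.2 - x.2) * e1
        linarith

/-- Cover by plane pieces gives partition into quasi-plane pieces. -/
theorem bundle (E : Set (Sym2 Pt)) (a b A B q : ℕ) (hq : 0 < q) (ha : a ≤ A * q) (hb : b ≤ B * q)
    (G : Fin a ⊕ Fin b → Set (Sym2 Pt))
    (hG : ∀ i, ∀ g ∈ G i, ∀ h ∈ G i, ¬ Cross g h)
    (hcov : ∀ e ∈ E, ∃ i, e ∈ G i) :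
    ∃ F : Fin (A + B) → Set (Sym2 Pt), (⋃ i, F i) = E ∧
      (Pairwise fun i j => Disjoint (F i) (F j)) ∧ (∀ i, KQuasiPlane (q + 1) (F i)) := by
  classical
  choose idx hidx using (fun e : E => hcov e e.2)
  let col : Fin a ⊕ Fin b → Fin (A + B) := fun i => match i with
    | Sum.inl i => ⟨i / q, by
        have : (i : ℕ) / q < A := (Nat.div_lt_iff_lt_mul hq).2 (lt_of_lt_of_le i.2 ha)
        omega⟩
    | Sum.inr i => ⟨A + i / q, by
        have : (i : ℕ) / q < B := (Nat.div_lt_iff_lt_mul hq).2 (lt_of_lt_of_le i.2 hb)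
        omega⟩
  let md : Fin a ⊕ Fin b → ℕ := fun i => match i with
    | Sum.inl i => i % q
    | Sum.inr i => i % q
  have hmd : ∀ i, md i < q := by
    rintro (i | i) <;> exact Nat.mod_lt _ hq
  have hinj : ∀ i j, col i = col j → md i = md j → i = j := by
    have key : ∀ i j : ℕ, i / q = j / q → i % q = j % q → i = j := by
      intro i j h1 h2
      rw [← Nat.div_add_mod i q, ← Nat.div_add_mod j q, h1, h2]
    have hlt : ∀ i : Fin a, (i : ℕ) / q < A := fun i =>
      (Nat.div_lt_iff_lt_mul hq).2 (lt_of_lt_of_le i.2 ha)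
    rintro (i | i) (j | j) h1 h2 <;> simp only [col, md, Fin.mk.injEq] at h1 h2
    · rw [Fin.ext (key _ _ h1 h2)]
    · exact absurd (hlt i) (by rw [h1]; exact not_lt.2 (Nat.le_add_right _ _))
    · exact absurd (hlt j) (by rw [← h1]; exact not_lt.2 (Nat.le_add_right _ _))
    · rw [Fin.ext (key _ _ (by omega) h2)]
  refine ⟨fun t => {e | ∃ he : e ∈ E, col (idx ⟨e, he⟩) = t}, ?_, ?_, ?_⟩
  · ext e
    simp
  · intro i j hij
    rw [Set.disjoint_left]
    rintro e ⟨he, h1⟩ ⟨he', h2⟩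
    exact hij (h1.symm.trans h2)
  · rintro t ⟨S, hSE, hS, hcr⟩
    let f : Sym2 Pt → ℕ := fun e => if he : e ∈ E then md (idx ⟨e, he⟩) else 0
    have hmap : ∀ e ∈ S, f e ∈ Finset.range q := by
      intro e he
      obtain ⟨hE, -⟩ := hSE he
      simp only [f, hE, dite_true, Finset.mem_range]
      exact hmd _
    obtain ⟨e, he, g, hg, hne, hfe⟩ := Finset.exists_ne_map_eq_of_card_lt_of_maps_to
      (by rw [hS, Finset.card_range]; omega) hmap
    obtain ⟨hE, h1⟩ := hSE he
    obtain ⟨hE', h2⟩ := hSE hg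
    simp only [f, hE, hE', dite_true] at hfe
    have := hinj _ _ (h1.trans h2.symm) hfe
    refine hG _ e (hidx ⟨e, hE⟩) g ?_ (hcr he hg hne)
    rw [this]
    exact hidx ⟨g, hE'⟩

/-- if `m` is the size of a largest crossing family of `K(P)` and
`3 ≤ k ≤ m`, then `K(P)` can be partitioned into at most `⌈m/(k-1)⌉ + ⌈(n-2m)/(k-1)⌉`
`k`-quasi-plane classes. -/
theorem stmt_12 (n : ℕ) (P : Finset Pt) (hP : GenPos P) (hcard : P.card = n)
    (m : ℕ) (hm : IsGreatest {c | ∃ S : Finset (Sym2 Pt), CrossingFamily P S ∧ S.card = c} m)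
    (k : ℕ) (hk3 : 3 ≤ k) (hkm : k ≤ m) :
    ∃ c : ℕ, c ≤ ⌈(m : ℝ) / ((k : ℝ) - 1)⌉₊ + ⌈((n : ℝ) - 2 * m) / ((k : ℝ) - 1)⌉₊ ∧
      ∃ F : Fin c → Set (Sym2 Pt),
        (⋃ i, F i) = KEdges P ∧
        (Pairwise fun i j => Disjoint (F i) (F j)) ∧
        (∀ i, KQuasiPlane k (F i)) := by
  classical
  obtain ⟨⟨S, ⟨hSE, hSc⟩, hSm⟩, -⟩ := hm
  have hV : (S.biUnion Sym2.toFinset).card = 2 * m := by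
    rw [Finset.card_biUnion]
    · rw [Finset.sum_congr rfl (g := fun _ => 2), Finset.sum_const, hSm]
      · simp [mul_comm]
      · intro e he
        obtain ⟨p, -, q, -, hpq, rfl⟩ := hSE he
        exact Sym2.card_toFinset_of_not_isDiag _ (by simpa using hpq)
    · intro e he f hf hne
      rw [Function.onFun, Finset.disjoint_left]
      intro x hx hx'
      rw [Sym2.mem_toFinset] at hx hx'
      exact (hSc he hf hne).1 x hx hx'
  have hVP : S.biUnion Sym2.toFinset ⊆ P := by
    intro x hx
    rw [Finset.mem_biUnion] at hx
    obtain ⟨e, he, hx⟩ := hx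
    rw [Sym2.mem_toFinset] at hx
    obtain ⟨p, hp, q, hq, hpq, rfl⟩ := hSE he
    rw [Sym2.mem_iff] at hx
    rcases hx with rfl | rfl <;> assumption
  have hR : (P \ S.biUnion Sym2.toFinset).card = n - 2 * m := by
    rw [Finset.card_sdiff_of_subset hVP, hV, hcard]
  have hn : 2 * m ≤ n := by
    rw [← hV, ← hcard]; exact Finset.card_le_card hVP
  obtain ⟨q, rfl⟩ : ∃ q, k = q + 1 := ⟨k - 1, by omega⟩
  have hq : 0 < q := by omega
  have hq' : (0 : ℝ) < q := by exact_mod_cast hq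
  have hqe : ((q + 1 : ℕ) : ℝ) - 1 = q := by push_cast; ring
  rw [hqe]
  refine ⟨_, le_rfl, ?_⟩
  let eS := S.equivFinOfCardEq hSm
  let eR := (P \ S.biUnion Sym2.toFinset).equivFinOfCardEq hR
  refine bundle (KEdges P) m (n - 2 * m) _ _ q hq ?_ ?_
    (fun i => match i with
      | Sum.inl i => DStar (eS.symm i : Sym2 Pt)
      | Sum.inr j => {e | (eR.symm j : Pt) ∈ e}) ?_ ?_
  · have := Nat.le_ceil ((m : ℝ) / q)
    rw [div_le_iff₀ hq'] at this
    exact_mod_cast this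
  · have := Nat.le_ceil (((n : ℝ) - 2 * m) / q)
    rw [div_le_iff₀ hq'] at this
    have h2 : ((n - 2 * m : ℕ) : ℝ) = (n : ℝ) - 2 * m := by
      rw [Nat.cast_sub hn]; push_cast; ring
    rw [← h2] at this ⊢
    exact_mod_cast this
  · rintro (i | j) g hg h hh
    · exact dstar_plane hg hh
    · exact not_cross_of_mem _ hg hh
  · rintro e ⟨p, hp, r, hr, hpr, rfl⟩
    by_cases h1 : p ∈ S.biUnion Sym2.toFinset
    swap
    · refine ⟨Sum.inr (eR ⟨p, Finset.mem_sdiff.2 ⟨hp, h1⟩⟩), ?_⟩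
      simp
    by_cases h2 : r ∈ S.biUnion Sym2.toFinset
    swap
    · refine ⟨Sum.inr (eR ⟨r, Finset.mem_sdiff.2 ⟨hr, h2⟩⟩), ?_⟩
      simp
    have hfin : ∀ e ∈ S, s(p, r) ∈ DStar e → ∃ i : Fin m ⊕ Fin (n - 2 * m), s(p, r) ∈
        (match i with
      | Sum.inl i => DStar (eS.symm i : Sym2 Pt)
      | Sum.inr j => {e | (eR.symm j : Pt) ∈ e}) := by
      intro e he h
      refine ⟨Sum.inl (eS ⟨e, he⟩), ?_⟩
      simpa using h
    rw [Finset.mem_biUnion] at h1 h2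
    obtain ⟨e, he, hpe⟩ := h1
    obtain ⟨f, hf, hrf⟩ := h2
    rw [Sym2.mem_toFinset] at hpe hrf
    by_cases hef : e = f
    · subst hef
      exact hfin e he (Or.inl ((Sym2.mem_and_mem_iff hpr).1 ⟨hpe, hrf⟩).symm)
    have hc := hSc he hf hef
    have hpf := hc.1 p hpe
    obtain ⟨p', rfl⟩ := hpe
    obtain ⟨r', rfl⟩ := hrf
    have hp' : p' ∈ P := hVP (Finset.mem_biUnion.2 ⟨_, he, by simp⟩)
    have hpp' : p ≠ p' := by
      obtain ⟨a, -, b, -, hab, h⟩ := hSE he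
      rw [Sym2.eq_iff] at h
      rcases h with ⟨rfl, rfl⟩ | ⟨rfl, rfl⟩
      · exact hab
      · exact hab.symm
    have hp'r : p' ≠ r := by
      rintro rfl
      exact hc.1 p' (by simp) (by simp)
    rcases orient_pos_or hc (orient_ne hpp' (hP p hp p' hp' r hr hpp' hpr hp'r)) with h | h
    · exact hfin _ he (Or.inr ⟨p, p', r, rfl, rfl, h⟩)
    · exact hfin _ hf (Or.inr ⟨r, r', p, rfl, Sym2.eq_swap, h⟩)
end
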